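/- Let Q be a well-formed formula and let N be a Q-complete, Q-consistent extension of the implicational propositional calculus, with v_N defined by v_N(A) = 1 when QQA ∈ T(N) and v_N(A) = 0 when QA ∈ T(N). For all wfs A, B: if v_N(A) = 0 or v_N(B) = 1 then v_N(A ⊃ B) = 1. -/

import Mathlib

/-- Well-formed formulas of the implicational propositional calculus:
propositional variables (indexed by ℕ, so the set of wfs is countable)
and the single connective ⊃. -/
inductive Wf where
  | var : ℕ → Wf
  | imp : Wf → Wf → Wf
deriving DecidableEq

infixr:60 " ⊃' " => Wf.imp

/-- `Deduces Γ A` : `A` is deducible from the set `Γ` of extra axioms/hypotheses,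
using the three axiom schemes of IPC (including the Peirce scheme) and modus ponens.
Theorems of IPC are `Deduces ∅ A`; for an extension `M` of IPC with extra-axiom
set `E`, `T(M)` is `Deduces E`, and deducibility from hypotheses `Γ` in `M` is
`Deduces (E ∪ Γ)`. -/
inductive Deduces : Set Wf → Wf → Prop where
  | hyp : ∀ {Γ : Set Wf} {A : Wf}, A ∈ Γ → Deduces Γ A
  | ax1 : ∀ {Γ : Set Wf} (A B : Wf), Deduces Γ (A ⊃' (B ⊃' A))
  | ax2 : ∀ {Γ : Set Wf} (A B C : Wf),
      Deduces Γ ((A ⊃' (B ⊃' C)) ⊃' ((A ⊃' B) ⊃' (A ⊃' C)))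
  | peirce : ∀ {Γ : Set Wf} (A B : Wf), Deduces Γ (((A ⊃' B) ⊃' A) ⊃' A)
  | mp : ∀ {Γ : Set Wf} {A B : Wf}, Deduces Γ (A ⊃' B) → Deduces Γ A → Deduces Γ B

namespace Deduces

variable {Γ : Set Wf} {A B C Q : Wf}

theorem weaken (hB : Deduces Γ B) : Deduces Γ (A ⊃' B) :=
  .mp (.ax1 B A) hB

theorem mp_under (hBC : Deduces Γ (A ⊃' (B ⊃' C))) (hB : Deduces Γ (A ⊃' B)) :
    Deduces Γ (A ⊃' C) :=
  .mp (.mp (.ax2 A B C) hBC) hB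

theorem imp_trans (hAB : Deduces Γ (A ⊃' B)) (hBC : Deduces Γ (B ⊃' C)) :
    Deduces Γ (A ⊃' C) :=
  mp_under hBC.weaken hAB

theorem contrapose (hAB : Deduces Γ (A ⊃' B)) : Deduces Γ ((B ⊃' Q) ⊃' (A ⊃' Q)) :=
  have distribute : Deduces Γ ((B ⊃' Q) ⊃' ((A ⊃' B) ⊃' (A ⊃' Q))) :=
    imp_trans (.ax1 (B ⊃' Q) A) (.ax2 A B Q)
  mp_under distribute hAB.weaken

theorem qq_imp_of_q_left (hA : Deduces Γ (A ⊃' Q)) :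
    Deduces Γ (((A ⊃' B) ⊃' Q) ⊃' Q) :=
  have replace_antecedent : Deduces Γ ((Q ⊃' B) ⊃' (A ⊃' B)) := hA.contrapose
  imp_trans replace_antecedent.contrapose (.peirce Q B)

theorem qq_imp_of_qq_right (hB : Deduces Γ ((B ⊃' Q) ⊃' Q)) :
    Deduces Γ (((A ⊃' B) ⊃' Q) ⊃' Q) :=
  imp_trans (ax1 B A).contrapose hB

end Deduces

/-- Let N (extra axioms E) be a Q-complete, Q-consistent extension of IPC and
let v = v_N be defined by v(A) = 1 when QQA ∈ T(N) and v(A) = 0 when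
QA ∈ T(N).  If v(A) = 0 or v(B) = 1 then v(A ⊃ B) = 1. -/
theorem stmt_15 (Q : Wf) (E : Set Wf)
    (hcomplete : ∀ A : Wf, Deduces E ((A ⊃' Q) ⊃' Q) ∨ Deduces E (A ⊃' Q))
    (hcons : ¬ Deduces E Q)
    (v : Wf → ℕ)
    (hv1 : ∀ A : Wf, Deduces E ((A ⊃' Q) ⊃' Q) → v A = 1)
    (hv0 : ∀ A : Wf, Deduces E (A ⊃' Q) → v A = 0) :
    ∀ A B : Wf, (v A = 0 ∨ v B = 1) → v (A ⊃' B) = 1 := by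
  rintro A B (hA | hB)
  · have hQA : Deduces E (A ⊃' Q) :=
      (hcomplete A).resolve_left fun hQQA => zero_ne_one (hA.symm.trans (hv1 A hQQA))
    exact hv1 _ hQA.qq_imp_of_q_left
  · have hQQB : Deduces E ((B ⊃' Q) ⊃' Q) :=
      (hcomplete B).resolve_right fun hQB => zero_ne_one ((hv0 B hQB).symm.trans hB)
    exact hv1 _ hQQB.qq_imp_of_qq_right
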